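/- For all positive integers a and b with a ≥ b + 1, R⁻(a+1, b) > R⁻(a, b); that is, for fixed b, R⁻(a,b) is strictly increasing in a on the range a ≥ b + 1. Moreover R⁻(b+2, b+1) > R⁻(b+1, b) for every positive integer b, i.e., R⁻(b+1, b) is strictly increasing in b. -/

import Mathlib

/-- The Beta function `B(a,b) = ∫₀¹ t^(a-1) (1-t)^(b-1) dt`. -/
noncomputable def betaFn (a b : ℝ) : ℝ := ∫ t in (0:ℝ)..1, t ^ (a - 1) * (1 - t) ^ (b - 1)

/-- `I(a,b)`: the probability that a `Beta(a,b)` random variable is `≥ 1/2`. -/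
noncomputable def I (a b : ℝ) : ℝ :=
  (1 / betaFn a b) * ∫ t in (1/2 : ℝ)..1, t ^ (a - 1) * (1 - t) ^ (b - 1)

/-- `h(x) = max (x, 1-x)`. -/
noncomputable def hFn (x : ℝ) : ℝ := max x (1 - x)

/-- Expected stage-wise reward. -/
noncomputable def R (a b : ℝ) : ℝ :=
  a / (a + b) * (hFn (I (a + 1) b) - hFn (I a b)) +
    b / (a + b) * (hFn (I a (b + 1)) - hFn (I a b))

/-- Optimistic knowledge-gradient reward. -/
noncomputable def Rplus (a b : ℝ) : ℝ :=
  max (hFn (I (a + 1) b) - hFn (I a b)) (hFn (I a (b + 1)) - hFn (I a b))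

/-- Pessimistic knowledge-gradient reward. -/
noncomputable def Rminus (a b : ℝ) : ℝ :=
  min (hFn (I (a + 1) b) - hFn (I a b)) (hFn (I a (b + 1)) - hFn (I a b))

/-!
For `a ≥ b + 1` every Beta tail probability in `R⁻(a,b)` is at least `1/2`, so `h` acts as the
identity and the minimum is attained by the `b + 1` term. Integration by parts evaluates it:
`R⁻(a,b) = I(a,b+1) - I(a,b) = -(1/2)^(a+b) / (b B(a,b))`. The recurrences for `B` then give
`R⁻(a+1,b) / R⁻(a,b) = (a+b) / (2a)` and
`R⁻(a+1,b+1) / R⁻(a,b) = (a+b)(a+b+1) / (4a(b+1))`. The first ratio is below `1` since `b < a`, the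
second is `(2b+1)/(2b+2) < 1` at `a = b + 1`, and `R⁻` is negative.
-/

section

open MeasureTheory Set

/-- The upper incomplete Beta function `∫ₓ¹ t^(a-1) (1-t)^(b-1) dt`, whose value at `x = 0` is
`betaFn a b` and whose value at `x = 1/2` is the integral in `I a b`. -/
noncomputable def betaTail (x a b : ℝ) : ℝ := ∫ t in x..1, t ^ (a - 1) * (1 - t) ^ (b - 1)

variable {x a b : ℝ}

lemma betaTail_zero (a b : ℝ) : betaTail 0 a b = betaFn a b := rfl

lemma I_eq_betaTail_div (a b : ℝ) : I a b = betaTail (1 / 2) a b / betaFn a b :=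
  one_div_mul_eq_div _ _

lemma intervalIntegrable_rpow_mul_one_sub_rpow (ha : 0 < a) (hb : 0 < b) :
    IntervalIntegrable (fun t : ℝ ↦ t ^ (a - 1) * (1 - t) ^ (b - 1)) volume 0 1 := by
  have hC := Complex.betaIntegral_convergent (u := a) (v := b) (by simpa) (by simpa)
  rw [intervalIntegrable_iff_integrableOn_Ioc_of_le zero_le_one] at hC ⊢
  refine IntegrableOn.congr_fun hC.re (fun t ht ↦ ?_) measurableSet_Ioc
  have h1t : 0 ≤ 1 - t := sub_nonneg.2 ht.2
  have hreal : (t : ℂ) ^ ((a : ℂ) - 1) * (1 - (t : ℂ)) ^ ((b : ℂ) - 1)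
      = ((t ^ (a - 1) * (1 - t) ^ (b - 1) : ℝ) : ℂ) := by
    push_cast [Complex.ofReal_cpow ht.1.le, Complex.ofReal_cpow h1t]
    rfl
  simp only [hreal, RCLike.re_to_complex, Complex.ofReal_re]

lemma intervalIntegrable_rpow_mul_one_sub_rpow_of_mem (ha : 0 < a) (hb : 0 < b) {u v : ℝ}
    (hu : u ∈ Icc (0 : ℝ) 1) (hv : v ∈ Icc (0 : ℝ) 1) :
    IntervalIntegrable (fun t : ℝ ↦ t ^ (a - 1) * (1 - t) ^ (b - 1)) volume u v :=
  (intervalIntegrable_rpow_mul_one_sub_rpow ha hb).mono_set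
    (uIcc_subset_uIcc (Icc_subset_uIcc hu) (Icc_subset_uIcc hv))

lemma betaTail_add_one_left_add_right (ha : 0 < a) (hb : 0 < b) (hx : x ∈ Icc (0 : ℝ) 1) :
    betaTail x (a + 1) b + betaTail x a (b + 1) = betaTail x a b := by
  have hone : (1 : ℝ) ∈ Icc (0 : ℝ) 1 := right_mem_Icc.2 zero_le_one
  rw [betaTail, betaTail, ← intervalIntegral.integral_add
    (intervalIntegrable_rpow_mul_one_sub_rpow_of_mem (by positivity) hb hx hone)
    (intervalIntegrable_rpow_mul_one_sub_rpow_of_mem ha (by positivity) hx hone)]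
  refine intervalIntegral.integral_congr fun t ht ↦ ?_
  rw [uIcc_of_le hx.2] at ht
  have hsucc {s c : ℝ} (hs : 0 ≤ s) (hc : 0 < c) : s ^ (c + 1 - 1) = s ^ (c - 1) * s := by
    rw [← Real.rpow_add_one' hs (by linarith)]
    ring_nf
  simp only [hsucc (hx.1.trans ht.1) ha, hsucc (sub_nonneg.2 ht.2) hb]
  ring

lemma hasDerivAt_rpow_mul_one_sub_rpow (a b : ℝ) {t : ℝ} (ht : t ∈ Ioo (0 : ℝ) 1) :
    HasDerivAt (fun t : ℝ ↦ t ^ a * (1 - t) ^ b)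
      (a * (t ^ (a - 1) * (1 - t) ^ b) - b * (t ^ a * (1 - t) ^ (b - 1))) t := by
  have hleft : HasDerivAt (fun t : ℝ ↦ t ^ a) (a * t ^ (a - 1)) t :=
    Real.hasDerivAt_rpow_const (.inl ht.1.ne')
  have hright : HasDerivAt (fun t : ℝ ↦ (1 - t) ^ b) (-1 * b * (1 - t) ^ (b - 1)) t :=
    ((hasDerivAt_id t).const_sub 1).rpow_const (.inl (sub_pos.2 ht.2).ne')
  exact (hleft.mul hright).congr_deriv (by ring)

lemma mul_betaTail_sub_mul_betaTail (ha : 0 < a) (hb : 0 < b) (hx : x ∈ Icc (0 : ℝ) 1) :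
    a * betaTail x a (b + 1) - b * betaTail x (a + 1) b = -(x ^ a * (1 - x) ^ b) := by
  have hone : (1 : ℝ) ∈ Icc (0 : ℝ) 1 := right_mem_Icc.2 zero_le_one
  have hint_a := (intervalIntegrable_rpow_mul_one_sub_rpow_of_mem (b := b + 1) ha
    (by positivity) hx hone).const_mul a
  have hint_b := (intervalIntegrable_rpow_mul_one_sub_rpow_of_mem (a := a + 1)
    (by positivity) hb hx hone).const_mul b
  have hcont : ContinuousOn (fun t : ℝ ↦ t ^ a * (1 - t) ^ b) (Icc x 1) :=
    ((Real.continuous_rpow_const ha.le).mul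
      ((Real.continuous_rpow_const hb.le).comp (by fun_prop))).continuousOn
  rw [betaTail, betaTail, ← intervalIntegral.integral_const_mul,
    ← intervalIntegral.integral_const_mul, ← intervalIntegral.integral_sub hint_a hint_b]
  simp only [add_sub_cancel_right] at hint_a hint_b ⊢
  rw [intervalIntegral.integral_eq_sub_of_hasDerivAt_of_le hx.2 hcont
    (fun t ht ↦ hasDerivAt_rpow_mul_one_sub_rpow a b ⟨hx.1.trans_lt ht.1, ht.2⟩)
    (hint_a.sub hint_b), sub_self, Real.zero_rpow hb.ne', mul_zero, zero_sub]

lemma add_mul_betaTail_add_one_left (ha : 0 < a) (hb : 0 < b) (hx : x ∈ Icc (0 : ℝ) 1) :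
    (a + b) * betaTail x (a + 1) b = a * betaTail x a b + x ^ a * (1 - x) ^ b := by
  linear_combination
    a * betaTail_add_one_left_add_right ha hb hx - mul_betaTail_sub_mul_betaTail ha hb hx

lemma add_mul_betaTail_add_one_right (ha : 0 < a) (hb : 0 < b) (hx : x ∈ Icc (0 : ℝ) 1) :
    (a + b) * betaTail x a (b + 1) = b * betaTail x a b - x ^ a * (1 - x) ^ b := by
  linear_combination
    b * betaTail_add_one_left_add_right ha hb hx + mul_betaTail_sub_mul_betaTail ha hb hx

lemma betaFn_pos (ha : 0 < a) (hb : 0 < b) : 0 < betaFn a b :=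
  intervalIntegral.intervalIntegral_pos_of_pos_on (intervalIntegrable_rpow_mul_one_sub_rpow ha hb)
    (fun _ ht ↦ mul_pos (Real.rpow_pos_of_pos ht.1 _) (Real.rpow_pos_of_pos (sub_pos.2 ht.2) _))
    zero_lt_one

lemma betaFn_add_one_left (ha : 0 < a) (hb : 0 < b) :
    betaFn (a + 1) b = a / (a + b) * betaFn a b := by
  have h := add_mul_betaTail_add_one_left ha hb (left_mem_Icc.2 zero_le_one)
  rw [Real.zero_rpow ha.ne', zero_mul, add_zero, betaTail_zero, betaTail_zero] at h
  field_simp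
  linear_combination h

lemma betaFn_add_one_right (ha : 0 < a) (hb : 0 < b) :
    betaFn a (b + 1) = b / (a + b) * betaFn a b := by
  have h := add_mul_betaTail_add_one_right ha hb (left_mem_Icc.2 zero_le_one)
  rw [Real.zero_rpow ha.ne', zero_mul, sub_zero, betaTail_zero, betaTail_zero] at h
  field_simp
  linear_combination h

lemma half_rpow_mul_one_sub_half_rpow (a b : ℝ) :
    (1 / 2 : ℝ) ^ a * (1 - 1 / 2) ^ b = (1 / 2) ^ (a + b) := by
  rw [sub_half, Real.rpow_add one_half_pos]

lemma I_add_one_left (ha : 0 < a) (hb : 0 < b) :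
    I (a + 1) b = I a b + (1 / 2) ^ (a + b) / (a * betaFn a b) := by
  have h := add_mul_betaTail_add_one_left ha hb (x := 1 / 2) (by norm_num)
  rw [half_rpow_mul_one_sub_half_rpow] at h
  have hB := betaFn_pos ha hb
  rw [I_eq_betaTail_div, I_eq_betaTail_div, betaFn_add_one_left ha hb]
  field_simp
  linear_combination h

lemma I_add_one_right (ha : 0 < a) (hb : 0 < b) :
    I a (b + 1) = I a b - (1 / 2) ^ (a + b) / (b * betaFn a b) := by
  have h := add_mul_betaTail_add_one_right ha hb (x := 1 / 2) (by norm_num)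
  rw [half_rpow_mul_one_sub_half_rpow] at h
  have hB := betaFn_pos ha hb
  rw [I_eq_betaTail_div, I_eq_betaTail_div, betaFn_add_one_right ha hb]
  field_simp
  linear_combination h

lemma betaTail_add_betaTail_one_sub (ha : 0 < a) (hb : 0 < b) (hx : x ∈ Icc (0 : ℝ) 1) :
    betaTail x a b + betaTail (1 - x) b a = betaFn a b := by
  have hreflect : betaTail (1 - x) b a = ∫ t in (0 : ℝ)..x, t ^ (a - 1) * (1 - t) ^ (b - 1) := by
    have h := intervalIntegral.integral_comp_sub_left (a := 0) (b := x)
      (fun t : ℝ ↦ t ^ (b - 1) * (1 - t) ^ (a - 1)) 1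
    simpa only [betaTail, sub_zero, sub_sub_cancel, mul_comm] using h.symm
  rw [hreflect, add_comm]
  exact intervalIntegral.integral_add_adjacent_intervals
    (intervalIntegrable_rpow_mul_one_sub_rpow_of_mem ha hb (left_mem_Icc.2 zero_le_one) hx)
    (intervalIntegrable_rpow_mul_one_sub_rpow_of_mem ha hb hx (right_mem_Icc.2 zero_le_one))

lemma rpow_mul_rpow_le_rpow_mul_rpow_swap {s t p q : ℝ} (hs : 0 < s) (hst : s ≤ t) (hpq : p ≤ q) :
    t ^ p * s ^ q ≤ t ^ q * s ^ p := by
  have ht : 0 < t := hs.trans_le hst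
  have hpow : s ^ (q - p) ≤ t ^ (q - p) := Real.rpow_le_rpow hs.le hst (sub_nonneg.2 hpq)
  rw [Real.rpow_sub hs, Real.rpow_sub ht, div_le_div_iff₀ (by positivity) (by positivity)] at hpow
  linarith

lemma betaTail_le_betaTail_swap (hb : 0 < b) (hab : b ≤ a) (hx : x ∈ Icc (1 / 2 : ℝ) 1) :
    betaTail x b a ≤ betaTail x a b := by
  have ha : 0 < a := hb.trans_le hab
  have hx₀ : x ∈ Icc (0 : ℝ) 1 := ⟨one_half_pos.le.trans hx.1, hx.2⟩
  have hone : (1 : ℝ) ∈ Icc (0 : ℝ) 1 := right_mem_Icc.2 zero_le_one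
  exact intervalIntegral.integral_mono_on_of_le_Ioo hx.2
    (intervalIntegrable_rpow_mul_one_sub_rpow_of_mem hb ha hx₀ hone)
    (intervalIntegrable_rpow_mul_one_sub_rpow_of_mem ha hb hx₀ hone)
    fun t ht ↦ rpow_mul_rpow_le_rpow_mul_rpow_swap (sub_pos.2 ht.2)
      (by linarith [hx.1, ht.1]) (by linarith)

lemma half_le_I (hb : 0 < b) (hab : b ≤ a) : 1 / 2 ≤ I a b := by
  have ha : 0 < a := hb.trans_le hab
  have hsplit := betaTail_add_betaTail_one_sub ha hb (x := 1 / 2) (by norm_num)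
  have hswap := betaTail_le_betaTail_swap hb hab (x := 1 / 2) (by norm_num)
  rw [sub_half] at hsplit
  rw [I_eq_betaTail_div, le_div_iff₀ (betaFn_pos ha hb)]
  linarith

lemma hFn_of_half_le (hx : 1 / 2 ≤ x) : hFn x = x :=
  max_eq_left (by linarith)

lemma Rminus_eq_neg_div (hb : 0 < b) (hab : b + 1 ≤ a) :
    Rminus a b = -((1 / 2) ^ (a + b) / (b * betaFn a b)) := by
  have ha : 0 < a := by linarith
  have hB := betaFn_pos ha hb
  have hgain : 0 < (1 / 2 : ℝ) ^ (a + b) / (a * betaFn a b) := by positivity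
  have hloss : 0 < (1 / 2 : ℝ) ^ (a + b) / (b * betaFn a b) := by positivity
  rw [Rminus, hFn_of_half_le (half_le_I hb (by linarith : b ≤ a)),
    hFn_of_half_le (half_le_I hb (by linarith : b ≤ a + 1)),
    hFn_of_half_le (half_le_I (by positivity) hab),
    I_add_one_left ha hb, I_add_one_right ha hb, min_eq_right (by linarith)]
  ring

lemma Rminus_neg (hb : 0 < b) (hab : b + 1 ≤ a) : Rminus a b < 0 := by
  have hB := betaFn_pos (by linarith : 0 < a) hb
  rw [Rminus_eq_neg_div hb hab, neg_lt_zero]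
  positivity

lemma Rminus_add_one_left (hb : 0 < b) (hab : b + 1 ≤ a) :
    Rminus (a + 1) b = (a + b) / (2 * a) * Rminus a b := by
  have ha : 0 < a := by linarith
  have hB := betaFn_pos ha hb
  rw [Rminus_eq_neg_div hb hab, Rminus_eq_neg_div hb (by linarith), betaFn_add_one_left ha hb,
    add_right_comm, Real.rpow_add_one (by norm_num)]
  field_simp

lemma Rminus_add_one_add_one (hb : 0 < b) (hab : b + 1 ≤ a) :
    Rminus (a + 1) (b + 1) = (a + b) * (a + b + 1) / (4 * a * (b + 1)) * Rminus a b := by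
  have ha : 0 < a := by linarith
  have hB := betaFn_pos ha hb
  rw [Rminus_eq_neg_div hb hab, Rminus_eq_neg_div (by positivity) (by linarith),
    betaFn_add_one_left ha (by positivity), betaFn_add_one_right ha hb,
    add_add_add_comm, one_add_one_eq_two, Real.rpow_add one_half_pos, Real.rpow_two]
  field_simp
  ring

theorem Rminus_strict_mono_general :
    (∀ a b : ℝ, 0 < b → b + 1 ≤ a → Rminus (a + 1) b > Rminus a b) ∧
    (∀ b : ℝ, 0 < b → Rminus (b + 2) (b + 1) > Rminus (b + 1) b) := by
  constructor
  · intro a b hb hab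
    have ha : 0 < a := by linarith
    have hratio : (a + b) / (2 * a) < 1 := by
      rw [div_lt_one (by positivity)]
      linarith
    rw [Rminus_add_one_left hb hab]
    exact lt_mul_of_lt_one_left (Rminus_neg hb hab) hratio
  · intro b hb
    have hratio : (b + 1 + b) * (b + 1 + b + 1) / (4 * (b + 1) * (b + 1)) < 1 := by
      rw [div_lt_one (by positivity)]
      nlinarith
    rw [show b + 2 = b + 1 + 1 by ring, Rminus_add_one_add_one hb le_rfl]
    exact lt_mul_of_lt_one_left (Rminus_neg hb le_rfl) hratio

end

theorem Rminus_strict_mono :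
    (∀ a b : ℕ, 0 < a → 0 < b → b + 1 ≤ a → Rminus ((a : ℝ) + 1) b > Rminus a b) ∧
    (∀ b : ℕ, 0 < b → Rminus ((b : ℝ) + 2) ((b : ℝ) + 1) > Rminus ((b : ℝ) + 1) b) := by
  exact ⟨fun a b _ hb hab ↦ Rminus_strict_mono_general.1 a b (mod_cast hb) (mod_cast hab),
    fun b hb ↦ Rminus_strict_mono_general.2 b (mod_cast hb)⟩
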